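/- arXiv:1912.04350 — 3 statements merged into one kernel-verified Lean document; each statement's English description precedes it below -/
import Mathlib

section
/- Let {G_i}_{i ∈ I} be a family of poly-free groups each of poly-free length at most n. Then the free product ∗_{i ∈ I} G_i is a poly-free group of length at most n. -/
universe u v

/-- Poly-free with a subnormal chain of length `n` (length at most `n`,
since successive subgroups may coincide): there is a chain
`1 = G₀ ⊴ G₁ ⊴ ⋯ ⊴ Gₙ = G` with each quotient `Gᵢ₊₁/Gᵢ` a free group. -/
def IsPolyFreeOfLen : ℕ → (G : Type u) → [Group G] → Prop
  | 0, G, _ => Subsingleton G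
  | n + 1, G, _ => ∃ (N : Subgroup G) (_ : N.Normal),
      IsPolyFreeOfLen n N ∧ IsFreeGroup (G ⧸ N)

/-- A group is poly-free if it admits a subnormal chain with free quotients. -/
def IsPolyFree (G : Type u) [Group G] : Prop := ∃ n, IsPolyFreeOfLen n G

/-- Normally poly-free with a chain of length `n`: a chain
`1 = G₀ ≤ G₁ ≤ ⋯ ≤ Gₙ = G` with every `Gᵢ` normal in `G` and every quotient
`Gᵢ₊₁/Gᵢ` a free group (expressed via a surjection onto a free group whose
kernel is the previous term). -/
def IsNormallyPolyFreeOfLen (n : ℕ) (G : Type u) [Group G] : Prop :=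
  ∃ c : Fin (n + 1) → Subgroup G,
    c 0 = ⊥ ∧ c (Fin.last n) = ⊤ ∧ (∀ i : Fin n, c i.castSucc ≤ c i.succ) ∧
    (∀ i, (c i).Normal) ∧
    ∀ i : Fin n, ∃ (F : Type u) (_ : Group F) (f : ↥(c i.succ) →* F),
      IsFreeGroup F ∧ Function.Surjective f ∧
      f.ker = (c i.castSucc).subgroupOf (c i.succ)

/-- A group is normally poly-free if it admits such a chain of some length. -/
def IsNormallyPolyFree (G : Type u) [Group G] : Prop :=
  ∃ n, IsNormallyPolyFreeOfLen n G


namespace PolyFreeAux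

open Monoid

/-- Invariance of the poly-free length under isomorphism (across universes). -/
theorem isPolyFreeOfLen_congr (n : ℕ) : ∀ {G : Type u} {H : Type v} [Group G] [Group H],
    (G ≃* H) → IsPolyFreeOfLen n G → IsPolyFreeOfLen n H := by
  induction n with
  | zero =>
    intro G H _ _ e h
    simp only [IsPolyFreeOfLen] at h ⊢
    exact e.symm.toEquiv.subsingleton
  | succ n ih =>
    intro G H _ _ e h
    simp only [IsPolyFreeOfLen] at h ⊢
    obtain ⟨N, hN, hl, hf⟩ := h
    have hM : (N.map (e : G →* H)).Normal := hN.map _ e.surjective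
    refine ⟨N.map (e : G →* H), hM, ih (e.subgroupMap N) hl, ?_⟩
    obtain ⟨ι, ⟨b⟩⟩ := hf.nonempty_basis
    exact (b.map (QuotientGroup.congr N (N.map (e : G →* H)) e rfl)).isFreeGroup

section split

universe w

variable {ι : Type w} {G Q : ι → Type w} [∀ i, Group (G i)] [∀ i, Group (Q i)]
  (p : ∀ i, G i →* Q i) (s : ∀ i, Q i →* G i)

/-- Cosets of a free factor. -/
abbrev Cos (Q : ι → Type w) [∀ i, Group (Q i)] (i : ι) : Type w :=
  CoprodI Q ⧸ (CoprodI.of : Q i →* CoprodI Q).range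

/-- The free product of the kernels, indexed by cosets. -/
abbrev P : Type w :=
  CoprodI (fun x : (Σ i, Cos Q i) => (p x.1).ker)

theorem exists_r (i : ι) (f : CoprodI Q) :
    ∃ q : Q i, (QuotientGroup.mk f : Cos Q i).out * CoprodI.of q = f := by
  have h : (QuotientGroup.mk (QuotientGroup.mk f : Cos Q i).out : Cos Q i) = QuotientGroup.mk f :=
    Quotient.out_eq _
  rw [QuotientGroup.eq] at h
  obtain ⟨q, hq⟩ := h
  exact ⟨q, by rw [hq]; group⟩

/-- The factor part of an element relative to its coset representative. -/
noncomputable def r (i : ι) (f : CoprodI Q) : Q i := (exists_r i f).choose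

theorem r_spec (i : ι) (f : CoprodI Q) :
    (QuotientGroup.mk f : Cos Q i).out * CoprodI.of (r i f) = f := (exists_r i f).choose_spec

theorem mk_mul_of (i : ι) (f : CoprodI Q) (q : Q i) :
    (QuotientGroup.mk (f * CoprodI.of q) : Cos Q i) = QuotientGroup.mk f :=
  QuotientGroup.mk_mul_of_mem f ⟨q, rfl⟩

theorem r_mul (i : ι) (f : CoprodI Q) (q : Q i) : r i (f * CoprodI.of q) = r i f * q := by
  apply CoprodI.of_injective i
  have h := r_spec i (f * CoprodI.of q)
  rw [mk_mul_of] at h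
  rw [map_mul]
  apply mul_left_cancel (a := (QuotientGroup.mk f : Cos Q i).out)
  rw [h, ← mul_assoc, r_spec]

theorem r_out (i : ι) (c : Cos Q i) : r i c.out = 1 := by
  apply CoprodI.of_injective i
  have h := r_spec i c.out
  have h2 : (QuotientGroup.mk c.out : Cos Q i) = c := Quotient.out_eq _
  rw [h2] at h
  simpa using h

/-- The element of `P` which represents the conjugate of `n` by `f`. -/
noncomputable def e (i : ι) (f : CoprodI Q) : (p i).ker →* P p :=
  (CoprodI.of (M := fun x : (Σ i, Cos Q i) => (p x.1).ker)
    (i := ⟨i, QuotientGroup.mk f⟩)).comp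
    (MulAut.conjNormal (s i (r i f)) : MulAut (p i).ker).toMonoidHom

theorem e_mul (i : ι) (f : CoprodI Q) (q : Q i) (n : (p i).ker) :
    e p s i (f * CoprodI.of q) n = e p s i f (MulAut.conjNormal (s i q) n) := by
  have key : ∀ c : Cos Q i, c = QuotientGroup.mk f → ∀ m : (p i).ker,
      CoprodI.of (M := fun x : (Σ i, Cos Q i) => (p x.1).ker) (i := ⟨i, c⟩) m
      = CoprodI.of (M := fun x : (Σ i, Cos Q i) => (p x.1).ker)
        (i := ⟨i, QuotientGroup.mk f⟩) m := by
    rintro c rfl m; rfl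
  simp only [e, MonoidHom.comp_apply]
  rw [key _ (mk_mul_of i f q), r_mul]
  simp

theorem e_out (i : ι) (c : Cos Q i) (n : (p i).ker) :
    e p s i c.out n
      = CoprodI.of (M := fun x : (Σ i, Cos Q i) => (p x.1).ker) (i := ⟨i, c⟩) n := by
  have key : ∀ d : Cos Q i, d = c → ∀ m : (p i).ker,
      CoprodI.of (M := fun x : (Σ i, Cos Q i) => (p x.1).ker) (i := ⟨i, d⟩) m
      = CoprodI.of (M := fun x : (Σ i, Cos Q i) => (p x.1).ker)
        (i := ⟨i, c⟩) m := by
    rintro d rfl m; rfl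
  simp only [e, MonoidHom.comp_apply]
  rw [key _ (Quotient.out_eq _), r_out]
  simp

theorem e_eq (i : ι) (f : CoprodI Q) (n : (p i).ker) :
    e p s i f n = e p s i (QuotientGroup.mk f : Cos Q i).out
      (MulAut.conjNormal (s i (r i f)) n) := by
  rw [← e_mul, r_spec]

/-- Action of `F` on `P`. -/
noncomputable def act (f : CoprodI Q) : P p →* P p :=
  CoprodI.lift fun x : (Σ i, Cos Q i) => e p s x.1 (f * x.2.out)

theorem act_e (f : CoprodI Q) (i : ι) (g : CoprodI Q) (n : (p i).ker) :
    act p s f (e p s i g n) = e p s i (f * g) n := by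
  rw [e_eq, e_out, act, CoprodI.lift_of, ← e_mul, mul_assoc, r_spec]

theorem P_hom_ext {H : Type*} [Monoid H] {a b : P p →* H}
    (h : ∀ i f n, a (e p s i f n) = b (e p s i f n)) : a = b := by
  apply CoprodI.ext_hom
  rintro ⟨i, c⟩
  ext n
  have := h i c.out n
  rw [e_out] at this
  exact this

theorem act_one : act p s 1 = MonoidHom.id _ := by
  apply P_hom_ext p s
  intro i f n
  rw [act_e, one_mul]; rfl

theorem act_mul (f g : CoprodI Q) : act p s (f * g) = (act p s f).comp (act p s g) := by
  apply P_hom_ext p s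
  intro i k n
  rw [MonoidHom.comp_apply, act_e, act_e, act_e, mul_assoc]

/-- The action as a homomorphism to automorphisms. -/
noncomputable def φ : CoprodI Q →* MulAut (P p) where
  toFun f := MonoidHom.toMulEquiv (act p s f) (act p s f⁻¹)
    (by rw [← act_mul, inv_mul_cancel, act_one]) (by rw [← act_mul, mul_inv_cancel, act_one])
  map_one' := by
    ext x
    exact DFunLike.congr_fun (act_one p s) x
  map_mul' f g := by
    ext x
    exact DFunLike.congr_fun (act_mul p s f g) x

theorem φ_e (f : CoprodI Q) (i : ι) (g : CoprodI Q) (n : (p i).ker) :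
    φ p s f (e p s i g n) = e p s i (f * g) n := act_e p s f i g n

variable (hs : ∀ i q, p i (s i q) = q)

/-- Kernel part of an element. -/
def kp (i : ι) (g : G i) : (p i).ker :=
  ⟨g * (s i (p i g))⁻¹, by simp [MonoidHom.mem_ker, hs]⟩

/-- The map to the semidirect product, on factors. -/
noncomputable def θi (i : ι) : G i →* (P p) ⋊[φ p s] (CoprodI Q) where
  toFun g := ⟨e p s i 1 (kp p s hs i g), CoprodI.of (p i g)⟩
  map_one' := by
    have : kp p s hs i 1 = 1 := by ext; simp [kp]
    ext <;> simp [this]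
  map_mul' g h := by
    have : kp p s hs i (g * h)
        = kp p s hs i g * MulAut.conjNormal (s i (p i g)) (kp p s hs i h) := by
      ext; simp [kp, mul_assoc]
    ext
    · rw [this, SemidirectProduct.mul_left, φ_e, map_mul, ← e_mul, one_mul, mul_one]
    · simp

/-- The map to the semidirect product. -/
noncomputable def Θ : CoprodI G →* (P p) ⋊[φ p s] (CoprodI Q) := CoprodI.lift (θi p s hs)

/-- The section on free products. -/
def S : CoprodI Q →* CoprodI G := CoprodI.lift fun i => CoprodI.of.comp (s i)

/-- The projection on free products. -/
def π : CoprodI G →* CoprodI Q := CoprodI.lift fun i => CoprodI.of.comp (p i)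

/-- The map from `P` to the free product. -/
noncomputable def Ψ : P p →* CoprodI G :=
  CoprodI.lift fun x : (Σ i, Cos Q i) =>
    (MulAut.conj (S s x.2.out)).toMonoidHom.comp (CoprodI.of.comp (p x.1).ker.subtype)

theorem Ψ_e (i : ι) (f : CoprodI Q) (n : (p i).ker) :
    Ψ p s (e p s i f n) = S s f * CoprodI.of (n : G i) * (S s f)⁻¹ := by
  rw [e_eq, e_out, Ψ, CoprodI.lift_of]
  conv_rhs => rw [← r_spec i f]
  have : S s (CoprodI.of (r i f)) = CoprodI.of (s i (r i f)) := by simp [S]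
  simp [this, mul_assoc]

theorem Θ_S (f : CoprodI Q) : Θ p s hs (S s f) = SemidirectProduct.inr f := by
  have : (Θ p s hs).comp (S s) = SemidirectProduct.inr := by
    apply CoprodI.ext_hom
    intro i
    ext q : 1
    have hk : kp p s hs i (s i q) = 1 := by ext; simp [kp, hs]
    simp only [MonoidHom.comp_apply, S, Θ, CoprodI.lift_of]
    ext
    · simp [θi, hk]
    · simp [θi, hs]
  exact DFunLike.congr_fun this f

theorem Θ_Ψ (x : P p) : Θ p s hs (Ψ p s x) = SemidirectProduct.inl x := by
  have : (Θ p s hs).comp (Ψ p s) = SemidirectProduct.inl := by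
    apply P_hom_ext p s
    intro i f n
    have hn : Θ p s hs (CoprodI.of (n : G i)) = SemidirectProduct.inl (e p s i 1 n) := by
      have hp : p i (n : G i) = 1 := n.2
      have hk : kp p s hs i (n : G i) = n := by ext; simp [kp, hp]
      simp only [Θ, CoprodI.lift_of]
      ext
      · simp [θi, hk]
      · simp [θi, hp]
    rw [MonoidHom.comp_apply, Ψ_e, map_mul, map_mul, map_inv, Θ_S, hn, ← map_inv,
      ← SemidirectProduct.inl_aut, φ_e, mul_one]
  exact DFunLike.congr_fun this x

theorem right_Θ (g : CoprodI G) : (Θ p s hs g).right = π p g := by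
  have : SemidirectProduct.rightHom.comp (Θ p s hs) = π p := by
    apply CoprodI.ext_hom
    intro i
    ext q : 1
    simp [Θ, π, θi]
  exact DFunLike.congr_fun this g

/-- Back from the semidirect product. -/
noncomputable def back : (P p) ⋊[φ p s] (CoprodI Q) →* CoprodI G :=
  SemidirectProduct.lift (Ψ p s) (S s) (by
    intro f
    apply P_hom_ext p s
    intro i g n
    have : φ p s f (e p s i g n) = _ := φ_e p s f i g n
    simp [this, Ψ_e, mul_assoc])

theorem back_Θ (g : CoprodI G) : back p s (Θ p s hs g) = g := by
  have : (back p s).comp (Θ p s hs) = MonoidHom.id _ := by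
    apply CoprodI.ext_hom
    intro i
    ext g : 1
    simp only [MonoidHom.comp_apply, Θ, CoprodI.lift_of, MonoidHom.id_apply]
    change back p s ⟨e p s i 1 (kp p s hs i g), CoprodI.of (p i g)⟩ = _
    rw [SemidirectProduct.mk_eq_inl_mul_inr, map_mul, back, SemidirectProduct.lift_inl,
      SemidirectProduct.lift_inr, Ψ_e]
    simp [S, kp]
  exact DFunLike.congr_fun this g

theorem Ψ_injective (hs : ∀ i q, p i (s i q) = q) : Function.Injective (Ψ p s) := by
  intro x y h
  have := congrArg (Θ p s hs) h
  rw [Θ_Ψ, Θ_Ψ] at this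
  exact SemidirectProduct.inl_injective this

theorem Ψ_range (hs : ∀ i q, p i (s i q) = q) : (Ψ p s).range = (π p).ker := by
  ext g
  rw [MonoidHom.mem_ker, ← right_Θ p s hs]
  constructor
  · rintro ⟨x, rfl⟩
    rw [Θ_Ψ]; rfl
  · intro h
    refine ⟨(Θ p s hs g).left, ?_⟩
    conv_rhs => rw [← back_Θ p s hs g, ← SemidirectProduct.inl_left_mul_inr_right (Θ p s hs g), h]
    simp [back]

theorem π_surjective (hs : ∀ i q, p i (s i q) = q) : Function.Surjective (π p) := by
  intro f
  refine ⟨S s f, ?_⟩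
  rw [← right_Θ p s hs, Θ_S]; rfl

/-- The kernel is a free product of copies of the kernels. -/
noncomputable def kerEquiv (hs : ∀ i q, p i (s i q) = q) : P p ≃* (π p).ker :=
  (MonoidHom.ofInjective (Ψ_injective p s hs)).trans (MulEquiv.subgroupCongr (Ψ_range p s hs))

end split

/-- A surjection onto a free group splits. -/
theorem exists_section {G Q : Type*} [Group G] [Group Q] [IsFreeGroup Q] (p : G →* Q)
    (hp : Function.Surjective p) : ∃ s : Q →* G, ∀ q, p (s q) = q := by
  refine ⟨IsFreeGroup.lift fun a => (hp (IsFreeGroup.of a)).choose, fun q => ?_⟩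
  have : p.comp (IsFreeGroup.lift fun a => (hp (IsFreeGroup.of a)).choose) = MonoidHom.id Q := by
    apply IsFreeGroup.ext_hom
    intro a
    rw [MonoidHom.comp_apply, IsFreeGroup.lift_of]
    exact (hp (IsFreeGroup.of a)).choose_spec
  exact DFunLike.congr_fun this q

theorem main (n : ℕ) : ∀ {ι : Type u} (G : ι → Type u) [∀ i, Group (G i)],
    (∀ i, IsPolyFreeOfLen n (G i)) → IsPolyFreeOfLen n (CoprodI G) := by
  induction n with
  | zero =>
    intro ι G _ h
    simp only [IsPolyFreeOfLen] at h ⊢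
    have : ∀ x : CoprodI G, x = 1 := by
      intro x
      induction x using CoprodI.induction_on with
      | one => rfl
      | of i m => rw [(h i).elim m 1, map_one]
      | mul x y hx hy => rw [hx, hy, mul_one]
    exact ⟨fun x y => (this x).trans (this y).symm⟩
  | succ n ih =>
    intro ι G _ h
    simp only [IsPolyFreeOfLen] at h ⊢
    choose N hN hl hf using h
    have hsec := fun i => exists_section (QuotientGroup.mk' (N i)) (QuotientGroup.mk'_surjective _)
    choose s hs using hsec
    refine ⟨(π fun i => QuotientGroup.mk' (N i)).ker, inferInstance, ?_, ?_⟩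
    · refine isPolyFreeOfLen_congr n (kerEquiv (fun i => QuotientGroup.mk' (N i)) s hs) (ih _ ?_)
      rintro ⟨i, c⟩
      exact isPolyFreeOfLen_congr n
        (MulEquiv.subgroupCongr (QuotientGroup.ker_mk' (N i)).symm) (hl i)
    · exact IsFreeGroup.ofMulEquiv
        (QuotientGroup.quotientKerEquivOfSurjective _ (π_surjective _ s hs)).symm

end PolyFreeAux

/-- A free product of poly-free groups, each of poly-free length at most `n`,
is poly-free of length at most `n`. -/
theorem isPolyFreeOfLen_coprodI {ι : Type v} (G : ι → Type u) [∀ i, Group (G i)]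
    (n : ℕ) (h : ∀ i, IsPolyFreeOfLen n (G i)) :
    IsPolyFreeOfLen n (Monoid.CoprodI G) := by
  have h1 := PolyFreeAux.main.{max u v} n (ι := ULift.{u} ι) (fun i => ULift.{v} (G i.down))
    (fun i => PolyFreeAux.isPolyFreeOfLen_congr n MulEquiv.ulift.symm (h i.down))
  refine PolyFreeAux.isPolyFreeOfLen_congr n ?_ h1
  refine MonoidHom.toMulEquiv
    (Monoid.CoprodI.lift fun i => Monoid.CoprodI.of.comp MulEquiv.ulift.toMonoidHom)
    (Monoid.CoprodI.lift fun i =>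
      (Monoid.CoprodI.of (M := fun i : ULift.{u} ι => ULift.{v} (G i.down)) (i := ⟨i⟩)).comp
        MulEquiv.ulift.symm.toMonoidHom) ?_ ?_
  · apply Monoid.CoprodI.ext_hom
    intro i
    ext x : 1
    simp
  · apply Monoid.CoprodI.ext_hom
    intro i
    ext x : 1
    simp
end

section
/- Let F : G₁ ∗ G₂ → G₁ × G₂ be the canonical homomorphism from the free product to the direct product of two groups. Then the kernel of F is a free group. -/
namespace KerCoprod

open Monoid.Coprod

universe u v

variable (A : Type u) (B : Type v) [Group A] [Group B]

/-- Index set of the basis: pairs of nontrivial elements. -/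
abbrev Idx := {p : A × B // p.1 ≠ 1 ∧ p.2 ≠ 1}

/-- Carrier of the action: words `b * a * n`. -/
abbrev St := FreeGroup (Idx A B) × A × B

variable {A B}

open Classical in
/-- The formal commutator. -/
noncomputable def e (a : A) (b : B) : FreeGroup (Idx A B) :=
  if h : a ≠ 1 ∧ b ≠ 1 then FreeGroup.of ⟨(a, b), h⟩ else 1

theorem e_one_left (b : B) : e (1 : A) b = 1 := by simp [e]

theorem e_one_right (a : A) : e a (1 : B) = 1 := by simp [e]

theorem e_of (x : Idx A B) : e x.1.1 x.1.2 = FreeGroup.of x := by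
  unfold e
  rw [dif_pos x.2]

/-- Action of the first factor. -/
noncomputable def fA (x : A) (s : St A B) : St A B :=
  (e (x * s.2.1) s.2.2 * (e s.2.1 s.2.2)⁻¹ * s.1, x * s.2.1, s.2.2)

/-- Action of the second factor. -/
def fB (y : B) (s : St A B) : St A B := (s.1, s.2.1, y * s.2.2)

theorem fA_one (s : St A B) : fA 1 s = s := by simp [fA]

theorem fA_mul (x y : A) (s : St A B) : fA (x * y) s = fA x (fA y s) := by
  simp [fA, mul_assoc]

theorem fB_one (s : St A B) : fB 1 s = s := by simp [fB]

theorem fB_mul (x y : B) (s : St A B) : fB (x * y) s = fB x (fB y s) := by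
  simp [fB, mul_assoc]

/-- Action of the first factor, bundled. -/
noncomputable def actA : A →* Function.End (St A B) where
  toFun x := fA x
  map_one' := funext fA_one
  map_mul' x y := funext (fA_mul x y)

/-- Action of the second factor, bundled. -/
def actB : B →* Function.End (St A B) where
  toFun y := fB y
  map_one' := funext fB_one
  map_mul' x y := funext (fB_mul x y)

/-- Action of the free product, bundled. -/
noncomputable def actHom : Monoid.Coprod A B →* Function.End (St A B) := lift actA actB

/-- Action of the free product. -/
noncomputable def act (g : Monoid.Coprod A B) (s : St A B) : St A B := actHom g s

theorem act_mul (g h : Monoid.Coprod A B) (s : St A B) : act (g * h) s = act g (act h s) :=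
  congrFun (map_mul actHom g h) s

theorem act_one (s : St A B) : act 1 s = s :=
  congrFun (map_one (actHom (A := A) (B := B))) s

theorem act_inv (g : Monoid.Coprod A B) (s : St A B) : act g⁻¹ (act g s) = s := by
  rw [← act_mul, inv_mul_cancel, act_one]

theorem act_inl (a : A) (s : St A B) : act (inl a) s =
    (e (a * s.2.1) s.2.2 * (e s.2.1 s.2.2)⁻¹ * s.1, a * s.2.1, s.2.2) := rfl

theorem act_inr (b : B) (s : St A B) : act (inr b) s = (s.1, s.2.1, b * s.2.2) := rfl

/-- The commutator in the free product. -/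
def c (a : A) (b : B) : Monoid.Coprod A B := (inl a)⁻¹ * (inr b)⁻¹ * inl a * inr b

/-- The map from the free group. -/
def phi : FreeGroup (Idx A B) →* Monoid.Coprod A B :=
  FreeGroup.lift fun x => c x.1.1 x.1.2

theorem phi_e (a : A) (b : B) : phi (e a b) = c a b := by
  by_cases h : a ≠ 1 ∧ b ≠ 1
  · have := e_of (⟨(a, b), h⟩ : Idx A B)
    simp only at this
    rw [this]
    simp [phi]
  · have hh : a = 1 ∨ b = 1 := by tauto
    rcases hh with rfl | rfl
    · simp [e_one_left, c]
    · simp [e_one_right, c]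

/-- Evaluation of states. -/
def q (s : St A B) : Monoid.Coprod A B := inr s.2.2 * inl s.2.1 * phi s.1

theorem q_act (g : Monoid.Coprod A B) : ∀ s, q (act g s) = g * q s := by
  induction g using Monoid.Coprod.induction_on with
  | inl a =>
    intro s
    simp only [act_inl, q, map_mul, map_inv, phi_e, c]
    group
  | inr b =>
    intro s
    simp [act_inr, q, mul_assoc]
  | mul x y hx hy =>
    intro s
    rw [act_mul, hx, hy, mul_assoc]

theorem act_phi (n : FreeGroup (Idx A B)) : ∀ m, act (phi n) (m, 1, 1) = (n * m, 1, 1) := by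
  induction n using FreeGroup.induction_on with
  | C1 => intro m; simp [act_one]
  | of x =>
    intro m
    rw [← e_of, phi_e, c, ← map_inv, ← map_inv]
    simp [act_mul, act_inl, act_inr, e_one_left, e_one_right, -map_inv]
  | inv_of x ih =>
    intro m
    have := act_inv (phi (FreeGroup.of x)) ((FreeGroup.of x)⁻¹ * m, 1, 1)
    rw [ih, ← map_inv] at this
    simpa using this
  | mul x y hx hy =>
    intro m
    rw [map_mul, act_mul, hy, hx, mul_assoc]

theorem act_snd (g : Monoid.Coprod A B) :
    ∀ s, (act g s).2 = lift (MonoidHom.inl A B) (MonoidHom.inr A B) g * s.2 := by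
  induction g using Monoid.Coprod.induction_on with
  | inl a => intro s; ext <;> simp [act_inl]
  | inr b => intro s; ext <;> simp [act_inr]
  | mul x y hx hy => intro s; rw [act_mul, hx, hy, map_mul, mul_assoc]

theorem phi_mem (n : FreeGroup (Idx A B)) :
    phi n ∈ (lift (MonoidHom.inl A B) (MonoidHom.inr A B)).ker := by
  have h := act_snd (phi n) (1, 1, 1)
  rw [act_phi] at h
  rw [MonoidHom.mem_ker]
  have h1 : ((1, 1) : A × B) = 1 := rfl
  simpa [h1] using h.symm

end KerCoprod

/-- The kernel of the canonical homomorphism from the free product `G₁ ∗ G₂` to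
the direct product `G₁ × G₂` is a free group. -/
theorem ker_coprod_to_prod_isFreeGroup (G₁ G₂ : Type*) [Group G₁] [Group G₂] :
    IsFreeGroup (Monoid.Coprod.lift (MonoidHom.inl G₁ G₂) (MonoidHom.inr G₁ G₂)).ker := by
  have hb : Function.Bijective (KerCoprod.phi.codRestrict
      (Monoid.Coprod.lift (MonoidHom.inl G₁ G₂) (MonoidHom.inr G₁ G₂)).ker
      KerCoprod.phi_mem) := by
    constructor
    · intro x y h
      have hh : KerCoprod.phi x = KerCoprod.phi y := congrArg Subtype.val h
      have hx := KerCoprod.act_phi x 1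
      rw [hh, KerCoprod.act_phi y 1] at hx
      simpa using (congrArg Prod.fst hx).symm
    · rintro ⟨g, hg⟩
      refine ⟨(KerCoprod.act g (1, 1, 1)).1, Subtype.ext ?_⟩
      have h := KerCoprod.q_act g (1, 1, 1)
      have h2 := KerCoprod.act_snd g (1, 1, 1)
      rw [MonoidHom.mem_ker.mp hg, one_mul] at h2
      rw [KerCoprod.q, h2] at h
      simpa [KerCoprod.q] using h
  exact (FreeGroupBasis.ofRepr (MulEquiv.ofBijective _ hb).symm).isFreeGroup
end

section
/- Let C ≤ A and C ≤ B and G = A ∗_C B, and let f : G → Q be a homomorphism that is injective on B and whose restriction to A has free kernel. If moreover f is injective on C, then ker(f) is free; consequently, if B maps onto a normally poly-free group with the remaining data as above, G admits a quotient map with free kernel onto that group. -/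
universe u v

/-- The two-element family of groups `A` (at `true`) and `B` (at `false`). -/
abbrev Fam (A B : Type u) : Bool → Type u := fun b => bif b then A else B

instance famGroup (A B : Type u) [Group A] [Group B] : ∀ b, Group (Fam A B b) :=
  fun b => match b with
  | true => inferInstanceAs (Group A)
  | false => inferInstanceAs (Group B)

/-- The family of inclusions of `C` into `A` and `B`; the amalgamated free product
`A ∗_C B` is then `Monoid.PushoutI (famHom ι₁ ι₂)`, with canonical injections
`Monoid.PushoutI.of true : A →* A ∗_C B` and `Monoid.PushoutI.of false : B →* A ∗_C B`
and common map `Monoid.PushoutI.base : C →* A ∗_C B`. -/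
def famHom {A B C : Type u} [Group A] [Group B] [Group C] (ι₁ : C →* A) (ι₂ : C →* B) :
    ∀ b, C →* Fam A B b := fun b => match b with
  | true => ι₁
  | false => ι₂



/-- Cocycles of a permutation action with values in a group. -/
def IsCoc {L S X : Type u} [Group L] [Group X] (ρ : L →* Equiv.Perm S) (c : L → S → X) : Prop :=
  ∀ g g' s, c (g * g') s = c g (ρ g' s) * c g' s

theorem IsCoc.one {L S X : Type u} [Group L] [Group X] {ρ : L →* Equiv.Perm S} {c : L → S → X}
    (h : IsCoc ρ c) (s : S) : c 1 s = 1 := by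
  have := h 1 1 s
  simpa using this

theorem exists_section {M S : Type u} [Group M] (σ : M →* Equiv.Perm S) :
    ∃ q : S → S, (∀ m s, q (σ m s) = q s) ∧ ∀ s, ∃ m, σ m (q s) = s := by
  let r : Setoid S :=
    { r := fun s t => ∃ m, σ m s = t
      iseqv := ⟨fun s => ⟨1, by simp⟩, fun {s t} ⟨m, hm⟩ => ⟨m⁻¹, by simp [← hm]⟩,
        fun {s t w} ⟨m, hm⟩ ⟨n, hn⟩ => ⟨n * m, by simp [hm, hn]⟩⟩ }
  refine ⟨fun s => (Quotient.mk r s).out, fun m s => ?_, fun s => ?_⟩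
  · have : Quotient.mk r (σ m s) = Quotient.mk r s := 
      Quotient.sound (Setoid.symm (show r s (σ m s) from ⟨m, rfl⟩))
    simp only [this]
  · exact Quotient.exact (Quotient.out_eq (Quotient.mk r s))

/-- Relative freeness of an action groupoid over the action groupoid of a subgroup. -/
theorem rel_free {L M S : Type u} [Group L] [Group M] (ρ : L →* Equiv.Perm S) (j : M →* L)
    (N : Subgroup L) (hN : ∀ g s, ρ g s = s ↔ g ∈ N)
    (hM : ∀ m s, ρ (j m) s = s → m = 1) (hfree : IsFreeGroup N) :
    ∃ (E : Type u) (lab : E → L × S), ∀ (X : Type u) [Group X] (d : M → S → X)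
      (_ : IsCoc (ρ.comp j) d) (l : E → X),
      ∃! c : L → S → X, IsCoc ρ c ∧ (∀ m s, c (j m) s = d m s) ∧
        ∀ e, c (lab e).1 (lab e).2 = l e := by
  classical
  obtain ⟨b₀, hb₀, hb₀'⟩ := exists_section ρ
  obtain ⟨q, hq, hq'⟩ := exists_section (ρ.comp j)
  simp only [MonoidHom.comp_apply] at hq hq'
  have hqq : ∀ s, q (q s) = q s := fun s => by
    obtain ⟨m, hm⟩ := hq' s
    conv_rhs => rw [← hm, hq]
  obtain ⟨b, hbdef⟩ : ∃ b : S → S, ∀ s, b s = q (b₀ s) := ⟨_, fun _ => rfl⟩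
  have hb : ∀ g s, b (ρ g s) = b s := fun g s => by rw [hbdef, hbdef, hb₀]
  have hb' : ∀ s, ∃ g, ρ g (b s) = s := fun s => by
    obtain ⟨g, hg⟩ := hb₀' s
    obtain ⟨m, hm⟩ := hq' (b₀ s)
    exact ⟨g * j m, by rw [hbdef, map_mul, Equiv.Perm.mul_apply, hm, hg]⟩
  have hqb : ∀ s, q (b s) = b s := fun s => by rw [hbdef, hqq]
  have hbb : ∀ s, b (b s) = b s := fun s => by
    obtain ⟨m, hm⟩ := hb' s
    conv_rhs => rw [← hm, hb]
  choose cs hcs using hq'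
  choose a₀ ha₀ using hb'
  obtain ⟨a, hadef⟩ : ∃ a : S → L, ∀ s, a s = if b s = s then 1 else a₀ s := ⟨_, fun _ => rfl⟩
  have ha : ∀ s, ρ (a s) (b s) = s := fun s => by
    rw [hadef]; split_ifs with h
    · simpa using h
    · exact ha₀ s
  have hbq : ∀ s, b (q s) = b s := fun s => by
    conv_rhs => rw [← hcs s, hb]
  have hinj : ∀ m m' s, ρ (j m) s = ρ (j m') s → m = m' := fun m m' s h => by
    have : m'⁻¹ * m = 1 := hM _ s (by simp [h])
    exact (inv_mul_eq_one.1 this).symm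
  obtain ⟨t, ht⟩ : ∃ t : S → L, ∀ s, t s = j (cs s) * a (q s) := ⟨_, fun _ => rfl⟩
  have hcsM : ∀ m s, cs (ρ (j m) s) = m * cs s := fun m s => by
    apply hinj _ _ (q s)
    rw [map_mul, map_mul, Equiv.Perm.mul_apply, hcs]
    conv_lhs => rw [← hq m, hcs]
  have htb : ∀ s, ρ (t s) (b s) = s := fun s => by
    rw [ht, map_mul, Equiv.Perm.mul_apply, ← hbq, ha, hcs]
  have htM : ∀ m s, t (ρ (j m) s) = j m * t s := fun m s => by
    rw [ht, ht, hcsM, hq, map_mul, mul_assoc]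
  have hcsq : ∀ s, q s = s → cs s = 1 := fun s h => by
    apply hM _ s
    have := hcs s
    rwa [h] at this
  have htq : ∀ s, q s = s → t s = a s := fun s h => by
    rw [ht, hcsq s h, h]; simp
  have ht1 : ∀ s, b s = s → t s = 1 := fun s h => by
    have h2 : q s = s := by rw [← h, hqb]
    rw [htq s h2, hadef, if_pos h]
  refine ⟨{p : S // q p = p ∧ b p ≠ p} ⊕ ({p : S // b p = p} × IsFreeGroup.Generators N),
    Sum.elim (fun p => (a p.1, b p.1)) (fun x => ((IsFreeGroup.of x.2 : N), x.1.1)), ?_⟩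
  intro X _ d hd l
  have hmem : ∀ g s, (t (ρ g s))⁻¹ * g * t s ∈ N := fun g s => by
    rw [← hN _ (b s), map_mul, map_mul, Equiv.Perm.mul_apply, Equiv.Perm.mul_apply, htb, map_inv,
      Equiv.Perm.inv_eq_iff_eq]
    conv_rhs => rw [← hb g, htb]
  apply existsUnique_of_exists_of_unique
  · obtain ⟨lh, hlh⟩ : ∃ lh : S → X, ∀ p, lh p =
      if hp : q p = p ∧ b p ≠ p then l (Sum.inl ⟨p, hp⟩) else 1 := ⟨_, fun _ => rfl⟩
    obtain ⟨φ, hφ⟩ : ∃ φ : S → N →* X, ∀ p, φ p = IsFreeGroup.lift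
      (fun i => if hp : b p = p then l (Sum.inr (⟨p, hp⟩, i)) else 1) := ⟨_, fun _ => rfl⟩
    obtain ⟨h, hh⟩ : ∃ h : S → X, ∀ s, h s = d (cs s) (q s) * lh (q s) := ⟨_, fun _ => rfl⟩
    have hhq : ∀ s, q s = s → h s = lh s := fun s hs => by
      rw [hh, hcsq s hs, hd.one, one_mul, hs]
    have hh1 : ∀ s, b s = s → h s = 1 := fun s hs => by
      have h2 : q s = s := by rw [← hs, hqb]
      rw [hhq s h2, hlh, dif_neg]
      tauto
    refine ⟨fun g s => h (ρ g s) * φ (b s) ⟨(t (ρ g s))⁻¹ * g * t s, hmem g s⟩ * (h s)⁻¹,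
      ?_, ?_, ?_⟩
    · intro g g' s
      have key : (⟨(t (ρ (g * g') s))⁻¹ * (g * g') * t s, hmem _ _⟩ : N) =
        ⟨(t (ρ g (ρ g' s)))⁻¹ * g * t (ρ g' s), hmem _ _⟩ *
          ⟨(t (ρ g' s))⁻¹ * g' * t s, hmem _ _⟩ := by
        apply Subtype.ext
        simp [mul_assoc]
      beta_reduce
      rw [key, map_mul (φ (b s)), hb, map_mul ρ, Equiv.Perm.mul_apply]
      group
    · intro m s
      have key : (⟨(t (ρ (j m) s))⁻¹ * j m * t s, hmem _ _⟩ : N) = 1 := by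
        apply Subtype.ext
        simp [htM]
      simp only [key, map_one, mul_one]
      rw [hh, hh, hcsM, hq, hd]
      simp [hcs]
    · rintro (⟨p, hp1, hp2⟩ | ⟨⟨p, hp⟩, i⟩)
      · have key : (⟨(t (ρ (a p) (b p)))⁻¹ * a p * t (b p), hmem _ _⟩ : N) = 1 := by
          apply Subtype.ext
          simp [ha, ht1 _ (hbb p), htq p hp1]
        change h (ρ (a p) (b p)) * φ (b (b p)) ⟨(t (ρ (a p) (b p)))⁻¹ * a p * t (b p), hmem _ _⟩ *
          (h (b p))⁻¹ = _
        rw [key, map_one, ha, hh1 _ (hbb p), hhq p hp1, hlh, dif_pos ⟨hp1, hp2⟩]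
        simp
      · have hfix : ρ ((IsFreeGroup.of i : N) : L) p = p := (hN _ _).2 (IsFreeGroup.of i : N).2
        have key : (⟨(t (ρ (IsFreeGroup.of i : N) p))⁻¹ * (IsFreeGroup.of i : N) * t p,
            hmem _ _⟩ : N) = IsFreeGroup.of i := by
          apply Subtype.ext
          simp [hfix, ht1 _ hp]
        change h (ρ (IsFreeGroup.of i : N) p) *
          φ (b p) ⟨(t (ρ (IsFreeGroup.of i : N) p))⁻¹ * (IsFreeGroup.of i : N) * t p, hmem _ _⟩ *
          (h p)⁻¹ = _
        rw [key, hfix, hh1 _ hp, hp, hφ, IsFreeGroup.lift_of, dif_pos hp]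
        simp
  · rintro c c' ⟨hc, hcd, hcl⟩ ⟨hc', hcd', hcl'⟩
    have ea : ∀ p, q p = p → c (a p) (b p) = c' (a p) (b p) := fun p hp => by
      by_cases h : b p = p
      · rw [hadef, if_pos h, hc.one, hc'.one]
      · exact (hcl (Sum.inl ⟨p, hp, h⟩)).trans (hcl' (Sum.inl ⟨p, hp, h⟩)).symm
    have et : ∀ s, c (t s) (b s) = c' (t s) (b s) := fun s => by
      rw [ht, hc, hc', hcd, hcd', ← hbq, ea _ (hqq s)]
    have en : ∀ (n : N) (p : S), b p = p → c n p = c' n p := fun n p hp => by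
      let F : ∀ c : L → S → X, IsCoc ρ c → (N →* X) := fun c hc =>
        { toFun := fun n => c n p
          map_one' := hc.one p
          map_mul' := fun x y => by
            have := hc x y p
            rwa [(hN _ _).2 y.2] at this }
      have : F c hc = F c' hc' := by
        apply IsFreeGroup.ext_hom
        intro i
        exact (hcl (Sum.inr (⟨p, hp⟩, i))).trans (hcl' (Sum.inr (⟨p, hp⟩, i))).symm
      exact DFunLike.congr_fun this n
    funext g s
    have e : ∀ c : L → S → X, IsCoc ρ c → c g s = c (t (ρ g s)) (b (ρ g s)) *
        c ((t (ρ g s))⁻¹ * g * t s) (b s) * (c (t s) (b s))⁻¹ := fun c hc => by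
      rw [eq_mul_inv_iff_mul_eq]
      have h1 := hc g (t s) (b s)
      rw [htb] at h1
      rw [← h1]
      have h2 := hc (t (ρ g s)) ((t (ρ g s))⁻¹ * g * t s) (b s)
      rw [(hN _ _).2 (hmem g s)] at h2
      rw [hb, ← h2]
      simp [mul_assoc]
    rw [e c hc, e c' hc', et, et, en ⟨_, hmem g s⟩ _ (hbb s)]


theorem isFreeGroup_of_subsingleton (G : Type u) [Group G] [Subsingleton G] : IsFreeGroup G := by
  refine IsFreeGroup.ofUniqueLift PEmpty.{u + 1} (fun x => x.elim) ?_
  intro H _ f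
  refine ⟨1, fun a => a.elim, fun y _ => ?_⟩
  ext g
  rw [Subsingleton.elim g 1]
  simp

/-- The homomorphism to the semidirect product attached to a cocycle. -/
def cocHom {L G S X : Type u} [Group L] [Group G] [Group X] [MulAction G S] (i : L →* G)
    (c : L → S → X) (hc : IsCoc ((MulAction.toPermHom G S).comp i) c) :
    L →* (S → X) ⋊[mulAutArrow] G where
  toFun g := ⟨fun s => c g ((i g)⁻¹ • s), i g⟩
  map_one' := by
    ext s
    · simp [hc.one]
    · simp
  map_mul' g g' := by
    ext s
    · have := hc g g' ((i (g * g'))⁻¹ • s)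
      change c (g * g') ((i (g * g'))⁻¹ • s) =
        c g ((i g)⁻¹ • s) * c g' ((i g')⁻¹ • (i g)⁻¹ • s)
      rw [this]
      simp [mul_smul]
    · simp

theorem coc_pushout {A B C G S : Type u} [Group A] [Group B] [Group C] [Group G] [MulAction G S]
    (iA : A →* G) (iB : B →* G) (j₁ : C →* A) (j₂ : C →* B)
    (hcomm : iA.comp j₁ = iB.comp j₂)
    (hpush : ∀ (X : Type u) [Group X] (α : A →* X) (β : B →* X), α.comp j₁ = β.comp j₂ →
      ∃! γ : G →* X, γ.comp iA = α ∧ γ.comp iB = β)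
    (X : Type u) [Group X] (cA : A → S → X) (cB : B → S → X)
    (hA : IsCoc ((MulAction.toPermHom G S).comp iA) cA)
    (hB : IsCoc ((MulAction.toPermHom G S).comp iB) cB)
    (hAB : ∀ m s, cA (j₁ m) s = cB (j₂ m) s) :
    ∃! c : G → S → X, IsCoc (MulAction.toPermHom G S) c ∧ (∀ a s, c (iA a) s = cA a s) ∧
      (∀ a s, c (iB a) s = cB a s) := by
  have hcomm' : ∀ m, iA (j₁ m) = iB (j₂ m) := fun m => DFunLike.congr_fun hcomm m
  obtain ⟨γ, ⟨hγA, hγB⟩, hu⟩ := hpush _ (cocHom iA cA hA) (cocHom iB cB hB) (by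
    ext m s
    · simp [cocHom, hAB, hcomm']
    · simp [cocHom, hcomm'])
  have hγA' : ∀ a, γ (iA a) = cocHom iA cA hA a := fun a => DFunLike.congr_fun hγA a
  have hγB' : ∀ a, γ (iB a) = cocHom iB cB hB a := fun a => DFunLike.congr_fun hγB a
  have hright : ∀ g, (γ g).right = g := by
    have h := (hpush G iA iB hcomm).unique (y₁ := SemidirectProduct.rightHom.comp γ)
      (y₂ := MonoidHom.id G) ⟨?_, ?_⟩ ⟨rfl, rfl⟩
    · exact fun g => DFunLike.congr_fun h g
    · ext a; simp [hγA', cocHom]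
    · ext a; simp [hγB', cocHom]
  refine ⟨fun g s => (γ g).left (g • s), ⟨?_, ?_, ?_⟩, ?_⟩
  · intro g g' s
    beta_reduce
    rw [map_mul, SemidirectProduct.mul_left, hright]
    change (γ g).left ((g * g') • s) * (γ g').left (g⁻¹ • (g * g') • s) = _
    simp [mul_smul]
  · intro a s
    simp [hγA', cocHom]
  · intro a s
    simp [hγB', cocHom]
  · rintro c ⟨hc, hcA, hcB⟩
    have := hu (cocHom (MonoidHom.id G) c hc) ⟨?_, ?_⟩
    · funext g s
      rw [← this]
      simp [cocHom]
    · ext a s <;> simp [cocHom, hcA]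
    · ext a s <;> simp [cocHom, hcB]

theorem isFreeGroup_of_equiv {H K : Type u} [Group H] [Group K] (h : IsFreeGroup H) (e : H ≃ K)
    (hm : ∀ x y, e (x * y) = e x * e y) : IsFreeGroup K :=
  IsFreeGroup.ofMulEquiv (MulEquiv.mk e hm)

section Groupoids
open CategoryTheory

/-- The functor attached to a cocycle. -/
def cocFunctor {G S X : Type u} [Group G] [Group X] [MulAction G S]
    (c : G → S → X) (hc : IsCoc (MulAction.toPermHom G S) c) :
    ActionCategory G S ⥤ SingleObj X where
  obj _ := ()
  map {a _} f := c f.val a.back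
  map_id a := hc.one _
  map_comp {a b d} f g := by
    have h : f.val • a.back = b.back := f.2
    have := hc g.val f.val a.back
    change c (g.val * f.val) a.back = c g.val b.back * c f.val a.back
    rw [this, ← h]
    rfl

theorem free_groupoid {G S E : Type u} [Group G] [MulAction G S] (lab : E → G × S)
    (h : ∀ (X : Type u) [Group X] (l : E → X), ∃! c : G → S → X,
      IsCoc (MulAction.toPermHom G S) c ∧ ∀ e, c (lab e).1 (lab e).2 = l e) :
    Nonempty (IsFreeGroupoid (ActionCategory G S)) := by
  refine ⟨{
    quiverGenerators := ⟨fun a b => {e : E // (lab e).2 = ActionCategory.back (M := G) a ∧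
      (lab e).1 • (lab e).2 = ActionCategory.back (M := G) b}⟩
    of := fun {a b} e => ⟨(lab e.1).1, by
      obtain ⟨e, h1, h2⟩ := e
      rw [h1] at h2
      exact h2⟩
    unique_lift := ?_ }⟩
  intro X _ f
  obtain ⟨c, ⟨hc, hcl⟩, hu⟩ := h X (fun e => @f (((lab e).2 : S) : ActionCategory G S)
    (((lab e).1 • (lab e).2 : S) : ActionCategory G S) ⟨e, rfl, rfl⟩)
  refine ⟨cocFunctor c hc, ?_, ?_⟩
  · rintro ⟨⟨⟩, a⟩ ⟨⟨⟩, b⟩ ⟨e, h1, h2⟩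
    change (lab e).2 = a at h1
    change (lab e).1 • (lab e).2 = b at h2
    subst h1 h2
    exact hcl e
  · intro F hF
    have := hu (fun g s => F.map (X := ((s : S) : ActionCategory G S))
      (Y := ((g • s : S) : ActionCategory G S)) ⟨g, rfl⟩) ⟨?_, ?_⟩
    · apply Functor.hext
      · intro
        apply Unit.ext
      · rintro ⟨⟨⟩, a⟩ ⟨⟨⟩, b⟩ ⟨(g : G), hg⟩
        replace hg : (show G from g) • (show S from a) = b := hg
        subst hg
        apply heq_of_eq
        exact congrFun (congrFun this g) a
    · intro g g' s
      have := F.map_comp (X := ((s : S) : ActionCategory G S))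
        (Y := ((g' • s : S) : ActionCategory G S)) (Z := ((g • g' • s : S) : ActionCategory G S))
        ⟨g', rfl⟩ ⟨g, rfl⟩
      refine Eq.trans ?_ this
      have key : ∀ (b : S) (hb : (g * g') • s = b), (F.map (X := ((s : S) : ActionCategory G S))
          (Y := (((g * g') • s : S) : ActionCategory G S)) ⟨g * g', rfl⟩ : X) =
          F.map (X := ((s : S) : ActionCategory G S))
          (Y := ((b : S) : ActionCategory G S)) ⟨g * g', hb⟩ := by
        rintro _ rfl
        rfl
      exact key _ (mul_smul _ _ _)
    · intro e
      exact hF (((lab e).2 : S) : ActionCategory G S)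
        (((lab e).1 • (lab e).2 : S) : ActionCategory G S) ⟨e, rfl, rfl⟩

theorem ker_free_abs {A B C G Q : Type u} [Group A] [Group B] [Group C] [Group G] [Group Q]
    (iA : A →* G) (iB : B →* G) (j₁ : C →* A) (j₂ : C →* B)
    (hcomm : iA.comp j₁ = iB.comp j₂)
    (hpush : ∀ (X : Type u) [Group X] (α : A →* X) (β : B →* X), α.comp j₁ = β.comp j₂ →
      ∃! γ : G →* X, γ.comp iA = α ∧ γ.comp iB = β)
    (f : G →* Q) (hC : Function.Injective (f.comp (iA.comp j₁)))
    (hB : Function.Injective (f.comp iB))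
    (hA : IsFreeGroup (f.comp iA).ker) : IsFreeGroup f.ker := by
  let S := G ⧸ f.ker
  let ρ : G →* Equiv.Perm S := MulAction.toPermHom G S
  have hρ : ∀ (g : G) (s : S), ρ g s = s ↔ f g = 1 := by
    intro g s
    induction s using QuotientGroup.induction_on with
    | H x =>
      change ((g * x : G) : S) = (x : S) ↔ _
      rw [eq_comm, QuotientGroup.eq, MonoidHom.mem_ker]
      simp only [map_mul, map_inv]
      rw [inv_mul_eq_one, eq_comm, mul_eq_right]
  have hfC : ∀ m, f (iA (j₁ m)) = 1 → m = 1 := fun m hm => by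
    apply hC; simpa using hm
  have hfB : ∀ m, f (iB m) = 1 → m = 1 := fun m hm => by
    apply hB; simpa using hm
  have hcomm' : ∀ m, iA (j₁ m) = iB (j₂ m) := fun m => DFunLike.congr_fun hcomm m
  obtain ⟨EC, labC, hEC⟩ := rel_free ((ρ.comp iA).comp j₁) (1 : PUnit.{u + 1} →* C) ⊥
    (fun g s => by
      rw [Subgroup.mem_bot]
      exact (hρ _ s).trans ⟨hfC g, fun h => by simp [h]⟩) (fun _ _ _ => rfl)
    (isFreeGroup_of_subsingleton _)
  obtain ⟨EA, labA, hEA⟩ := rel_free (ρ.comp iA) j₁ (f.comp iA).ker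
    (fun g s => hρ _ s) (fun m s h => hfC m ((hρ _ s).1 h)) hA
  obtain ⟨EB, labB, hEB⟩ := rel_free (ρ.comp iB) j₂ ⊥
    (fun g s => by
      rw [Subgroup.mem_bot]
      exact (hρ _ s).trans ⟨hfB g, fun h => by simp [h]⟩)
    (fun m s h => hfC m (by rw [hcomm']; exact (hρ _ s).1 h))
    (isFreeGroup_of_subsingleton _)
  have hρC : (ρ.comp iA).comp j₁ = (ρ.comp iB).comp j₂ := by
    rw [MonoidHom.comp_assoc, MonoidHom.comp_assoc, hcomm]
  have hcoc : ∀ {X : Type u} [Group X] {L M : Type u} [Group L] [Group M] (r : L →* Equiv.Perm S)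
      (i : M →* L) (c : L → S → X), IsCoc r c → IsCoc (r.comp i) (fun m s => c (i m) s) := by
    intro X _ L M _ _ r i c hc g g' s
    beta_reduce
    rw [map_mul, hc]
    rfl
  have hfree : Nonempty (IsFreeGroupoid (ActionCategory G S)) := by
    refine free_groupoid (E := EC ⊕ EA ⊕ EB)
      (Sum.elim (fun e => (iA (j₁ (labC e).1), (labC e).2))
        (Sum.elim (fun e => (iA (labA e).1, (labA e).2)) (fun e => (iB (labB e).1, (labB e).2)))) ?_
    intro X _ l
    obtain ⟨d, ⟨hd, -, hdl⟩, hdu⟩ := hEC X (fun _ _ => 1) (fun _ _ _ => by simp)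
      (fun e => l (Sum.inl e))
    obtain ⟨cA, ⟨hcA, hcAd, hcAl⟩, hcAu⟩ := hEA X d hd (fun e => l (Sum.inr (Sum.inl e)))
    obtain ⟨cB, ⟨hcB, hcBd, hcBl⟩, hcBu⟩ := hEB X d (hρC ▸ hd) (fun e => l (Sum.inr (Sum.inr e)))
    obtain ⟨c, ⟨hc, hccA, hccB⟩, hcu⟩ := coc_pushout iA iB j₁ j₂ hcomm hpush X cA cB hcA hcB
      (fun m s => by rw [hcAd, hcBd])
    refine ⟨c, ⟨hc, ?_⟩, ?_⟩
    · rintro (e | e | e)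
      · change c (iA (j₁ (labC e).1)) (labC e).2 = _
        rw [hccA, hcAd, hdl]
      · change c (iA (labA e).1) (labA e).2 = _
        rw [hccA, hcAl]
      · change c (iB (labB e).1) (labB e).2 = _
        rw [hccB, hcBl]
    · rintro c' ⟨hc', hl'⟩
      have h1 : (fun m s => c' (iA (j₁ m)) s) = d := hdu _ ⟨hcoc _ _ _ (hcoc _ _ _ hc'),
        fun m s => by
          change c' (iA (j₁ 1)) s = 1
          rw [map_one, map_one]; exact hc'.one s, fun e => hl' (Sum.inl e)⟩
      have h2 : (fun m s => c' (iA m) s) = cA := hcAu _ ⟨hcoc _ _ _ hc',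
        fun m s => congrFun (congrFun h1 m) s, fun e => hl' (Sum.inr (Sum.inl e))⟩
      have h3 : (fun m s => c' (iB m) s) = cB := hcBu _ ⟨hcoc _ _ _ hc',
        fun m s => by
          beta_reduce
          rw [← hcomm']
          exact congrFun (congrFun h1 m) s, fun e => hl' (Sum.inr (Sum.inr e))⟩
      exact hcu _ ⟨hc', fun a s => congrFun (congrFun h2 a) s,
        fun a s => congrFun (congrFun h3 a) s⟩
  obtain ⟨hfree⟩ := hfree
  have hconn : IsConnected (ActionCategory G (G ⧸ f.ker)) := inferInstance
  have h := @IsFreeGroupoid.endIsFreeOfConnectedFree (ActionCategory G (G ⧸ f.ker)) _ hconn hfree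
    (ActionCategory.objEquiv G (G ⧸ f.ker) ((1 : G) : G ⧸ f.ker))
  let e := ActionCategory.endMulEquivSubgroup f.ker
  exact isFreeGroup_of_equiv h e.toEquiv (fun x y => map_mul e x y)

end Groupoids

/-- Let `C ≤ A`, `C ≤ B` (via injections `ι₁`, `ι₂`), `G = A ∗_C B`, and let
`f : G → Q` be a homomorphism that is injective on `B`, injective on `C`, and
whose restriction to `A` has free kernel. Then `ker f` is free; consequently, if
`f` maps `G` onto a normally poly-free group `Q`, then `G` admits a quotient map
with free kernel onto that group. -/
theorem ker_isFreeGroup_of_amalgamated_injective_on_B (A B C Q : Type u)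
    [Group A] [Group B] [Group C] [Group Q]
    (ι₁ : C →* A) (ι₂ : C →* B)
    (h₁ : Function.Injective ι₁) (h₂ : Function.Injective ι₂)
    (f : Monoid.PushoutI (famHom ι₁ ι₂) →* Q)
    (hC : Function.Injective (f.comp (Monoid.PushoutI.base (famHom ι₁ ι₂))))
    (hB : Function.Injective (f.comp (Monoid.PushoutI.of (φ := famHom ι₁ ι₂) false)))
    (hA : IsFreeGroup (f.comp (Monoid.PushoutI.of (φ := famHom ι₁ ι₂) true)).ker) :
    IsFreeGroup f.ker ∧
      (Function.Surjective f → IsNormallyPolyFree Q →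
        ∃ g : Monoid.PushoutI (famHom ι₁ ι₂) →* Q,
          Function.Surjective g ∧ IsFreeGroup g.ker) := by
  have hmain : IsFreeGroup f.ker := by
    refine ker_free_abs (A := A) (B := B) (C := C)
      (Monoid.PushoutI.of (φ := famHom ι₁ ι₂) true)
      (Monoid.PushoutI.of (φ := famHom ι₁ ι₂) false) ι₁ ι₂ ?_ ?_ f ?_ hB hA
    · exact (Monoid.PushoutI.of_comp_eq_base (φ := famHom ι₁ ι₂) true).trans
        (Monoid.PushoutI.of_comp_eq_base (φ := famHom ι₁ ι₂) false).symm
    · intro X _ α β hαβ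
      let F : ∀ b, Fam A B b →* X := fun b => match b with
        | true => α
        | false => β
      have hF : ∀ b, (F b).comp (famHom ι₁ ι₂ b) = α.comp ι₁ := by
        rintro (_ | _)
        · exact hαβ.symm
        · rfl
      refine ⟨Monoid.PushoutI.lift (φ := famHom ι₁ ι₂) F (α.comp ι₁) hF, ⟨?_, ?_⟩, ?_⟩
      · exact MonoidHom.ext fun a => Monoid.PushoutI.lift_of (φ := famHom ι₁ ι₂) F _ hF (i := true) a
      · exact MonoidHom.ext fun a =>
          Monoid.PushoutI.lift_of (φ := famHom ι₁ ι₂) F _ hF (i := false) a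
      · rintro γ ⟨hγ1, hγ2⟩
        apply Monoid.PushoutI.hom_ext_nonempty
        rintro (_ | _)
        · refine hγ2.trans (MonoidHom.ext fun a => ?_)
          exact (Monoid.PushoutI.lift_of (φ := famHom ι₁ ι₂) F _ hF (i := false) a).symm
        · refine hγ1.trans (MonoidHom.ext fun a => ?_)
          exact (Monoid.PushoutI.lift_of (φ := famHom ι₁ ι₂) F _ hF (i := true) a).symm
    · have := Monoid.PushoutI.of_comp_eq_base (φ := famHom ι₁ ι₂) true
      rw [← this] at hC
      exact hC
  exact ⟨hmain, fun hs _ => ⟨f, hs, hmain⟩⟩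
end
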